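/- Let I be an instance of {0,1} d-dimensional vector bin packing with bin size B ∈ ℤ⁺, let p denote the maximum, over coordinates r ∈ {1,…,d}, of the number of indices i with vᵢ(r) = 1, assume p ≥ 2, and let F = FF(I). Then d·p·(p−1) ≥ B²·(F−1)(F−2)/2 + B·(F−1). -/

import Mathlib

/-!
Call two items in conflict in coordinate `r` if both have a `1` there. When first-fit puts item `i`
into bin `k`, every bin `j < k` was blocked: in some coordinate `r` with `v i r = 1` it already held
`B` items with a `1` (`firstFit_blocked`). Hence `i` has at least `B * (k - 1)` conflicts with earlier
items (`conflicts_ge`). An item in the last bin `F` also shows that each of the bins `1, …, F - 1`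
holds at least `B` items, so the total number of conflicts is at least
`B * (B * ∑_{k < F} (k - 1) + (F - 1))` (`sum_levels_ge`).
On the other hand a coordinate with `c` ones contributes exactly `c * (c - 1) / 2` conflicts
(`two_mul_pairs`), which is at most `p * (p - 1) / 2`.
The resulting inequality is stronger than the claim by a factor of two.
-/

/-- First-fit assignment for {0,1} d-dimensional vector bin packing with bin size B:
`firstFit d B v i` is the least positive bin index `j` such that adding `v i` to the
vectors among `v 0, …, v (i-1)` already assigned to bin `j` keeps every coordinate sum `≤ B`. -/
noncomputable def firstFit (d B : ℕ) (v : ℕ → Fin d → ℕ) : ℕ → ℕ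
  | i => sInf {j | 1 ≤ j ∧ ∀ r : Fin d,
      (∑ i' ∈ (Finset.range i).attach,
        if firstFit d B v i'.1 = j then v i'.1 r else 0) + v i r ≤ B}
termination_by i => i
decreasing_by exact Finset.mem_range.mp i'.2

/-- Number of bins used by first-fit on the instance `v 0, …, v (n-1)`. -/
noncomputable def ffBins (d B n : ℕ) (v : ℕ → Fin d → ℕ) : ℕ :=
  Finset.sup (Finset.range n) (firstFit d B v)

/-- Optimal number of bins: the least `m` such that `{0,…,n-1}` can be partitioned into
`m` bins (fibers of `f`), each with every coordinate sum `≤ B`. -/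
noncomputable def vbpOPT (d B n : ℕ) (v : ℕ → Fin d → ℕ) : ℕ :=
  sInf {m | ∃ f : ℕ → ℕ, (∀ i < n, f i < m) ∧
    ∀ j, ∀ r : Fin d, (∑ i ∈ Finset.range n, if f i = j then v i r else 0) ≤ B}

/-- `maxRowCount d n v` is the maximum, over coordinates `r`, of the number of
indices `i < n` with `v i r = 1`. -/
def maxRowCount (d n : ℕ) (v : ℕ → Fin d → ℕ) : ℕ :=
  Finset.sup Finset.univ (fun r : Fin d => ((Finset.range n).filter (fun i => v i r = 1)).card)

theorem firstFit_eq (d B : ℕ) (v : ℕ → Fin d → ℕ) (i : ℕ) :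
    firstFit d B v i = sInf {j | 1 ≤ j ∧ ∀ r : Fin d,
      (∑ i' ∈ Finset.range i, if firstFit d B v i' = j then v i' r else 0) + v i r ≤ B} := by
  rw [firstFit]
  congr 1
  ext j
  have h : ∀ r : Fin d, (∑ i' ∈ (Finset.range i).attach,
      if firstFit d B v i'.1 = j then v i'.1 r else 0) =
      ∑ i' ∈ Finset.range i, if firstFit d B v i' = j then v i' r else 0 := fun r =>
    Finset.sum_attach (Finset.range i) (fun i' => if firstFit d B v i' = j then v i' r else 0)
  simp only [Set.mem_ofPred_eq, h]

/-- The set of admissible bins is nonempty, so `sInf` is not the junk value `0`. -/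
theorem firstFit_pos {d B : ℕ} (hB : 1 ≤ B) {v : ℕ → Fin d → ℕ}
    (hv : ∀ i, ∀ r : Fin d, v i r ≤ 1) (i : ℕ) : 1 ≤ firstFit d B v i := by
  have hne : {j | 1 ≤ j ∧ ∀ r : Fin d,
      (∑ i' ∈ Finset.range i, if firstFit d B v i' = j then v i' r else 0) + v i r ≤ B}.Nonempty := by
    -- a bin beyond all those in use is still empty
    refine ⟨Finset.sup (Finset.range i) (firstFit d B v) + 1, by omega, fun r => ?_⟩
    rw [Finset.sum_eq_zero]
    · have := hv i r
      omega
    · intro i' hi'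
      have := Finset.le_sup (f := firstFit d B v) hi'
      rw [if_neg (by omega)]
  rw [firstFit_eq]
  exact (Nat.sInf_mem hne).1

theorem firstFit_blocked {d B : ℕ} {v : ℕ → Fin d → ℕ}
    (hv : ∀ i, ∀ r : Fin d, v i r ≤ 1) {i j : ℕ} (hj : 1 ≤ j) (hji : j < firstFit d B v i)
    (hroom : ∀ r : Fin d,
      (∑ i' ∈ Finset.range i, if firstFit d B v i' = j then v i' r else 0) ≤ B) :
    ∃ r : Fin d, v i r = 1 ∧
      B ≤ ∑ i' ∈ Finset.range i, if firstFit d B v i' = j then v i' r else 0 := by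
  rw [firstFit_eq] at hji
  have h := Nat.notMem_of_lt_sInf hji
  simp only [Set.mem_ofPred_eq, not_and, not_forall, not_le] at h
  obtain ⟨r, hr⟩ := h hj
  have h1 := hv i r
  have h2 := hroom r
  exact ⟨r, by omega, by omega⟩

/-- Every bin is feasible at every time. -/
theorem firstFit_feasible {d B : ℕ} (hB : 1 ≤ B) {v : ℕ → Fin d → ℕ}
    (hv : ∀ i, ∀ r : Fin d, v i r ≤ 1) (j : ℕ) (r : Fin d) (i : ℕ) :
    (∑ i' ∈ Finset.range i, if firstFit d B v i' = j then v i' r else 0) ≤ B := by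
  induction i with
  | zero => simp
  | succ i ih =>
    rw [Finset.sum_range_succ]
    split_ifs with h
    · have hpos := firstFit_pos hB hv i
      rw [firstFit_eq] at h hpos
      have := (Nat.sInf_mem (Nat.nonempty_of_pos_sInf hpos)).2 r
      rwa [h] at this
    · simpa using ih

/-- Item `i` has at least `B` conflicts with each of the `firstFit d B v i - 1` bins before its
own. -/
theorem conflicts_ge {d B : ℕ} (hB : 1 ≤ B) {v : ℕ → Fin d → ℕ}
    (hv : ∀ i, ∀ r : Fin d, v i r ≤ 1) (i : ℕ) :
    B * (firstFit d B v i - 1) ≤ ∑ r : Fin d, v i r * ∑ i' ∈ Finset.range i, v i' r := by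
  have h1 : ∀ j ∈ Finset.Ico 1 (firstFit d B v i), B ≤ ∑ r : Fin d, v i r *
      ∑ i' ∈ Finset.range i, if firstFit d B v i' = j then v i' r else 0 := by
    intro j hj
    rw [Finset.mem_Ico] at hj
    obtain ⟨r, hr, hBr⟩ := firstFit_blocked hv hj.1 hj.2
      (fun r => firstFit_feasible hB hv j r i)
    refine le_trans ?_ (Finset.single_le_sum (fun _ _ => Nat.zero_le _) (Finset.mem_univ r))
    simpa [hr] using hBr
  calc B * (firstFit d B v i - 1) = ∑ j ∈ Finset.Ico 1 (firstFit d B v i), B := by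
        simp [mul_comm]
    _ ≤ _ := Finset.sum_le_sum h1
    _ = ∑ r : Fin d, v i r * ∑ i' ∈ Finset.range i, ∑ j ∈ Finset.Ico 1 (firstFit d B v i),
          if firstFit d B v i' = j then v i' r else 0 := by
        rw [Finset.sum_comm]
        refine Finset.sum_congr rfl fun r _ => ?_
        rw [← Finset.mul_sum, Finset.sum_comm]
    _ ≤ _ := by
        gcongr with r _ i' _
        rw [Finset.sum_ite_eq]
        split_ifs <;> simp

/-- For a `0`-`1` sequence with `c` ones among its first `n` terms, twice the number of pairs of
ones is `c ^ 2 - c`. -/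
theorem two_mul_pairs (w : ℕ → ℕ) (hw : ∀ i, w i ≤ 1) (n : ℕ) :
    2 * ∑ i ∈ Finset.range n, w i * ∑ i' ∈ Finset.range i, w i' + ∑ i ∈ Finset.range n, w i =
      (∑ i ∈ Finset.range n, w i) ^ 2 := by
  induction n with
  | zero => simp
  | succ n ih =>
    rw [Finset.sum_range_succ, Finset.sum_range_succ _ n]
    have h : w n ^ 2 = w n := by
      have := hw n
      interval_cases w n <;> rfl
    linear_combination ih - h

/-- The bins `1, …, F - 1` hold at least `B` items each and bin `F` at least one. -/
theorem sum_levels_ge {d B n : ℕ} (hB : 1 ≤ B) {v : ℕ → Fin d → ℕ}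
    (hv : ∀ i, ∀ r : Fin d, v i r ≤ 1) (G : ℕ) {i₀ : ℕ} (hi₀ : i₀ < n)
    (hG : firstFit d B v i₀ = G + 1) (hmax : ∀ i < n, firstFit d B v i ≤ G + 1) :
    B * ∑ k ∈ Finset.range G, k + G ≤ ∑ i ∈ Finset.range n, (firstFit d B v i - 1) := by
  have hfib : ∀ k, ∑ i ∈ Finset.range n with firstFit d B v i - 1 = k, (firstFit d B v i - 1) =
      (Finset.filter (fun i => firstFit d B v i - 1 = k) (Finset.range n)).card * k := by
    intro k
    rw [Finset.sum_congr rfl (g := fun _ => k) (fun i hi => (Finset.mem_filter.mp hi).2)]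
    simp
  rw [← Finset.sum_fiberwise_of_maps_to (s := Finset.range n) (t := Finset.range (G + 1))
    (g := fun i => firstFit d B v i - 1)
    (fun i hi => by
      have := hmax i (Finset.mem_range.mp hi)
      rw [Finset.mem_range]
      omega), Finset.sum_range_succ, Finset.mul_sum]
  simp only [hfib]
  refine add_le_add (Finset.sum_le_sum fun k hk => Nat.mul_le_mul_right k ?_)
    (Nat.le_mul_of_pos_left G (Finset.card_pos.mpr ⟨i₀, ?_⟩))
  · rw [Finset.mem_range] at hk
    obtain ⟨r, -, hr⟩ := firstFit_blocked (i := i₀) (j := k + 1) hv (by omega) (by omega)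
      (fun r => firstFit_feasible hB hv _ r _)
    refine hr.trans ?_
    rw [← Finset.sum_filter, Finset.card_eq_sum_ones]
    refine (Finset.sum_le_sum fun i _ => hv i r).trans (Finset.sum_le_sum_of_subset ?_)
    intro i hi
    rw [Finset.mem_filter, Finset.mem_range] at hi ⊢
    omega
  · rw [Finset.mem_filter, Finset.mem_range]
    omega

/-- With `p ≥ 2` the maximum row count and `F` the number of first-fit bins,
`d·p·(p−1) ≥ B²·(F−1)(F−2)/2 + B·(F−1)`. -/
theorem firstFit_counting_inequality (d B n : ℕ) (hd : 1 ≤ d) (hB : 1 ≤ B) (hn : 1 ≤ n)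
    (v : ℕ → Fin d → ℕ) (hv : ∀ i, ∀ r : Fin d, v i r ≤ 1)
    (hp : 2 ≤ maxRowCount d n v) :
    (B : ℝ) ^ 2 * ((ffBins d B n v : ℝ) - 1) * ((ffBins d B n v : ℝ) - 2) / 2
        + (B : ℝ) * ((ffBins d B n v : ℝ) - 1)
      ≤ (d : ℝ) * (maxRowCount d n v : ℝ) * ((maxRowCount d n v : ℝ) - 1) := by
  obtain ⟨i₀, hi₀, hF⟩ := Finset.exists_mem_eq_sup (Finset.range n)
    ⟨0, Finset.mem_range.mpr hn⟩ (firstFit d B v)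
  obtain ⟨G, hG⟩ : ∃ G, firstFit d B v i₀ = G + 1 :=
    ⟨firstFit d B v i₀ - 1, by have := firstFit_pos hB hv i₀; omega⟩
  have hFG : ffBins d B n v = G + 1 := hF.trans hG
  have hlow := sum_levels_ge hB hv G (Finset.mem_range.mp hi₀) hG fun i hi =>
    (Finset.le_sup (f := firstFit d B v) (Finset.mem_range.mpr hi)).trans hFG.le
  have hconf : B * ∑ i ∈ Finset.range n, (firstFit d B v i - 1) ≤
      ∑ r : Fin d, ∑ i ∈ Finset.range n, v i r * ∑ i' ∈ Finset.range i, v i' r := by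
    rw [Finset.mul_sum, Finset.sum_comm]
    exact Finset.sum_le_sum fun i _ => conflicts_ge hB hv i
  set p := maxRowCount d n v with hpdef
  have hrow : ∀ r : Fin d, ∑ i ∈ Finset.range n, v i r ≤ p := by
    intro r
    have h1 : ∑ i ∈ Finset.range n, v i r =
        ((Finset.range n).filter (fun i => v i r = 1)).card := by
      rw [Finset.card_filter]
      refine Finset.sum_congr rfl fun i _ => ?_
      have := hv i r
      split_ifs <;> omega
    rw [h1, hpdef, maxRowCount]
    exact Finset.le_sup (f := fun r : Fin d =>
      ((Finset.range n).filter (fun i => v i r = 1)).card) (Finset.mem_univ r)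
  have hpair : ∀ r : Fin d,
      2 * ∑ i ∈ Finset.range n, v i r * ∑ i' ∈ Finset.range i, v i' r ≤ p * (p - 1) := by
    intro r
    have h := two_mul_pairs (fun i => v i r) (fun i => hv i r) n
    have hr := hrow r
    obtain ⟨q, hq⟩ : ∃ q, p = q + 1 := ⟨p - 1, by omega⟩
    simp only at h
    generalize ∑ i ∈ Finset.range n, v i r = c at h hr
    have hc : c * c ≤ c + p * (p - 1) := by
      have := Nat.mul_le_mul hr (Nat.sub_le_sub_right hr 1)
      rcases c with _ | c
      · simp
      · simp only [Nat.add_sub_cancel] at this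
        linarith
    linarith
  have hup := Finset.sum_le_sum fun (r : Fin d) (_ : r ∈ Finset.univ) => hpair r
  rw [← Finset.mul_sum, Finset.sum_const, Finset.card_univ, Fintype.card_fin, smul_eq_mul] at hup
  have hgauss : (∑ k ∈ Finset.range G, k) * 2 = G * (G - 1) := Finset.sum_range_id_mul_two G
  have hmain : 2 * (B * (B * ∑ k ∈ Finset.range G, k + G)) ≤ d * (p * (p - 1)) :=
    (Nat.mul_le_mul_left 2 ((Nat.mul_le_mul_left B hlow).trans hconf)).trans hup
  have hgaussR : ((∑ k ∈ Finset.range G, k : ℕ) : ℝ) * 2 = G * ((G : ℝ) - 1) := by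
    rcases G with _ | G
    · simp
    · have : (((∑ k ∈ Finset.range (G + 1), k) * 2 : ℕ) : ℝ) = ((G + 1) * G : ℕ) := by
        rw [hgauss, Nat.add_sub_cancel]
      push_cast at this ⊢
      linarith
  have hmainR : 2 * ((B : ℝ) * (B * ((∑ k ∈ Finset.range G, k : ℕ) : ℝ) + G)) ≤
      d * (p * ((p : ℝ) - 1)) := by
    have : ((2 * (B * (B * ∑ k ∈ Finset.range G, k + G)) : ℕ) : ℝ) ≤ (d * (p * (p - 1)) : ℕ) := by
      exact_mod_cast hmain
    rw [Nat.cast_mul d, Nat.cast_mul p, Nat.cast_sub (by omega : 1 ≤ p)] at this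
    simpa only [Nat.cast_mul, Nat.cast_add, Nat.cast_ofNat, Nat.cast_one] using this
  rw [hFG]
  push_cast only [Nat.cast_add, Nat.cast_one]
  generalize ((∑ k ∈ Finset.range G, k : ℕ) : ℝ) = S at hgaussR hmainR
  have hS : (0 : ℝ) ≤ (B : ℝ) * (B * S + G) := by
    have : (0 : ℝ) ≤ S := by
      have : (0 : ℝ) ≤ G * ((G : ℝ) - 1) := by
        rcases G with _ | G
        · simp
        · push_cast
          have : (0 : ℝ) ≤ G := Nat.cast_nonneg G
          nlinarith
      linarith
    positivity
  calc (B : ℝ) ^ 2 * ((G : ℝ) + 1 - 1) * ((G : ℝ) + 1 - 2) / 2 + B * ((G : ℝ) + 1 - 1)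
      = B * (B * S + G) := by linear_combination (-(B : ℝ) ^ 2 / 2) * hgaussR
    _ ≤ 2 * (B * (B * S + G)) := by linarith
    _ ≤ d * (p * ((p : ℝ) - 1)) := hmainR
    _ = d * p * ((p : ℝ) - 1) := by ring
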